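/- arXiv:1204.0078 — 4 statements merged into one kernel-verified Lean document; each statement's English description precedes it below -/
import Mathlib

section
/- Let (X, Σ, μ) be a subprobability space, let Q be an error-control family on X, and let P be a Q-acceptable partition of X. Let P_max ∈ P be an element of maximal measure, i.e., μ(P_max) = max{μ(P) : P ∈ P}, and let Q ∈ Q be chosen so that P_max ⊆ Q. Then h(μ; {Q} ∪ P_{X∖Q}) ≤ h(μ; P), where P_{X∖Q} = {P ∖ Q : P ∈ P}. -/
open MeasureTheory ENNReal Filter

/-- The Shannon function `sh x = -x * log₂ x` (with `sh 0 = 0`, since `log 0 = 0`). -/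
noncomputable def sh (x : ℝ) : ℝ := -x * Real.logb 2 x

/-- A (countable, ℕ-indexed) partition of `X` w.r.t. the measure `μ`:
measurable, pairwise disjoint sets whose union has null complement. -/
def IsPartition {X : Type*} [MeasurableSpace X] (μ : Measure X) (P : ℕ → Set X) : Prop :=
  (∀ i, MeasurableSet (P i)) ∧ Pairwise (Function.onFun Disjoint P) ∧
    μ (Set.univ \ ⋃ i, P i) = 0

/-- The entropy `h(μ; P) = Σ_i sh(μ(P_i)) ∈ [0,∞]` of a countable family of sets. -/
noncomputable def partEntropy {X : Type*} [MeasurableSpace X]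
    (μ : Measure X) (P : ℕ → Set X) : ℝ≥0∞ :=
  ∑' i, ENNReal.ofReal (sh ((μ (P i)).toReal))

/-- An error-control family: a family of measurable sets covering `X`. -/
def IsErrorControl {X : Type*} [MeasurableSpace X] (𝒬 : Set (Set X)) : Prop :=
  (∀ Q ∈ 𝒬, MeasurableSet Q) ∧ ⋃₀ 𝒬 = Set.univ

/-- `P` is `𝒬`-acceptable: every element of `P` is contained in some member of `𝒬`. -/
def Acceptable {X : Type*} (𝒬 : Set (Set X)) (P : ℕ → Set X) : Prop :=
  ∀ i, ∃ Q ∈ 𝒬, P i ⊆ Q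

/-- The entropy `H(μ; 𝒬)`: the infimum of entropies of `𝒬`-acceptable partitions
(`= ∞` if there is none). -/
noncomputable def coverEntropy {X : Type*} [MeasurableSpace X]
    (μ : Measure X) (𝒬 : Set (Set X)) : ℝ≥0∞ :=
  ⨅ (P : ℕ → Set X) (_ : IsPartition μ P) (_ : Acceptable 𝒬 P), partEntropy μ P

/-!
Passing from the masses `p i = μ (P i)` to `r i = μ (P i \ Q)`, with `q = μ Q` collected in one
place, moves mass away from the atoms of `P` and onto the largest one, `m = p i₀`, where `r i₀ = 0`.
Since `sh` is concave and `p i ≤ m`, removing mass from atom `i` raises its `sh` by at most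
`-sh' m` per unit, while piling the removed mass onto the largest atom changes its `sh` by at most
`sh' m` per unit. The total amount moved is the same, so the two contributions cancel.
-/

section Concave

variable {S : Set ℝ} {f : ℝ → ℝ} {f' : ℝ}

lemma concaveOn_le_add_deriv_mul_sub_of_le_of_le {x y m : ℝ} (hf : ConcaveOn ℝ S f)
    (hx : x ∈ S) (hy : y ∈ S) (hm : m ∈ S) (hxy : x ≤ y) (hym : y ≤ m) (hf' : HasDerivAt f f' m) :
    f x ≤ f y + f' * (x - y) := by
  rcases hxy.eq_or_lt with rfl | hxy
  · simp
  have deriv_le_slope : f' ≤ (f y - f x) / (y - x) := by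
    rcases hym.eq_or_lt with rfl | hym
    · simpa only [slope_def_field] using hf.le_slope_of_hasDerivAt hx hm hxy hf'
    · calc f' ≤ (f m - f y) / (m - y) := by
            simpa only [slope_def_field] using hf.le_slope_of_hasDerivAt hy hm hym hf'
        _ ≤ (f y - f x) / (y - x) := hf.slope_anti_adjacent hx hm hxy hym
  rw [le_div_iff₀ (sub_pos.2 hxy)] at deriv_le_slope
  linarith

lemma concaveOn_le_add_deriv_mul_sub_of_ge {m x : ℝ} (hf : ConcaveOn ℝ S f)
    (hm : m ∈ S) (hx : x ∈ S) (hmx : m ≤ x) (hf' : HasDerivAt f f' m) :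
    f x ≤ f m + f' * (x - m) := by
  rcases hmx.eq_or_lt with rfl | hmx
  · simp
  have slope_le_deriv : (f x - f m) / (x - m) ≤ f' := by
    simpa only [slope_def_field] using hf.slope_le_of_hasDerivAt hm hx hmx hf'
  rw [div_le_iff₀ (sub_pos.2 hmx)] at slope_le_deriv
  linarith

variable {ι : Type*} {p r : ι → ℝ} {q : ℝ} {i₀ : ι}

lemma summable_comp_of_concaveOn_of_le (hf : ConcaveOn ℝ S f) (hr : ∀ i, r i ∈ S)
    (hp : ∀ i, p i ∈ S) (hrp : ∀ i, r i ≤ p i) (hmax : ∀ i, p i ≤ p i₀)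
    (hf' : HasDerivAt f f' (p i₀)) (hsub : Summable fun i ↦ p i - r i)
    (hfr : ∀ i, 0 ≤ f (r i)) (hfp : Summable fun i ↦ f (p i)) :
    Summable fun i ↦ f (r i) := by
  refine .of_nonneg_of_le hfr (fun i ↦ ?_) (hfp.sub (hsub.mul_left f'))
  linarith [concaveOn_le_add_deriv_mul_sub_of_le_of_le hf (hr i) (hp i) (hp i₀) (hrp i) (hmax i)
    hf']

lemma concaveOn_add_tsum_le_of_hasSum_sub (hf : ConcaveOn ℝ S f) (hr : ∀ i, r i ∈ S)
    (hp : ∀ i, p i ∈ S) (hrq : r i₀ + q ∈ S) (hrp : ∀ i, r i ≤ p i) (hmax : ∀ i, p i ≤ p i₀)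
    (hf' : HasDerivAt f f' (p i₀)) (hq : HasSum (fun i ↦ p i - r i) q)
    (hfr : Summable fun i ↦ f (r i)) (hfp : Summable fun i ↦ f (p i)) :
    f (r i₀ + q) + ∑' i, f (r i) ≤ f (r i₀) + ∑' i, f (p i) := by
  have loss_nonneg (i) : 0 ≤ f (p i) - f' * (p i - r i) - f (r i) := by
    linarith [concaveOn_le_add_deriv_mul_sub_of_le_of_le hf (hr i) (hp i) (hp i₀) (hrp i) (hmax i)
      hf']
  have loss_le : f (p i₀) - f' * (p i₀ - r i₀) - f (r i₀)
      ≤ ∑' i, f (p i) - f' * q - ∑' i, f (r i) :=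
    le_hasSum ((hfp.hasSum.sub (hq.mul_left f')).sub hfr.hasSum) i₀ fun i _ ↦ loss_nonneg i
  have sub_le : p i₀ - r i₀ ≤ q := le_hasSum hq i₀ fun i _ ↦ sub_nonneg.2 (hrp i)
  have gain_le : f (r i₀ + q) ≤ f (p i₀) + f' * (r i₀ + q - p i₀) :=
    concaveOn_le_add_deriv_mul_sub_of_ge hf (hp i₀) hrq (by linarith) hf'
  linarith

end Concave

section Shannon

lemma sh_eq_inv_mul_negMulLog (x : ℝ) : sh x = (Real.log 2)⁻¹ * Real.negMulLog x := by
  rw [sh, Real.logb, Real.negMulLog]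
  ring

@[simp] lemma sh_zero : sh 0 = 0 := by simp [sh]

lemma sh_nonneg {x : ℝ} (hx₀ : 0 ≤ x) (hx₁ : x ≤ 1) : 0 ≤ sh x := by
  rw [sh_eq_inv_mul_negMulLog]
  exact mul_nonneg (by positivity) (Real.negMulLog_nonneg hx₀ hx₁)

lemma concaveOn_sh : ConcaveOn ℝ (Set.Ici 0) sh := by
  rw [funext sh_eq_inv_mul_negMulLog]
  exact Real.concaveOn_negMulLog.smul (by positivity : 0 ≤ (Real.log 2)⁻¹)

lemma differentiableAt_sh {x : ℝ} (hx : x ≠ 0) : DifferentiableAt ℝ sh x := by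
  rw [funext sh_eq_inv_mul_negMulLog]
  exact (Real.differentiableAt_negMulLog_iff.2 hx).const_mul _

variable {ι : Type*} {p r : ι → ℝ} {q : ℝ} {i₀ : ι}

lemma ofReal_sh_add_tsum_le_of_pos (hr : ∀ i, 0 ≤ r i) (hrp : ∀ i, r i ≤ p i)
    (hmax : ∀ i, p i ≤ p i₀) (hpos : 0 < p i₀) (hr₀ : r i₀ = 0)
    (hq : HasSum (fun i ↦ p i - r i) q) (hq₁ : q ≤ 1) :
    ENNReal.ofReal (sh q) + ∑' i, ENNReal.ofReal (sh (r i))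
      ≤ ∑' i, ENNReal.ofReal (sh (p i)) := by
  have hp (i) : 0 ≤ p i := (hr i).trans (hrp i)
  have max_le : p i₀ ≤ q := by
    simpa [hr₀] using le_hasSum hq i₀ fun i _ ↦ sub_nonneg.2 (hrp i)
  have hq₀ : 0 ≤ q := (hp i₀).trans max_le
  have hp₁ (i) : p i ≤ 1 := (hmax i).trans (max_le.trans hq₁)
  have hshp (i) : 0 ≤ sh (p i) := sh_nonneg (hp i) (hp₁ i)
  have hshr (i) : 0 ≤ sh (r i) := sh_nonneg (hr i) ((hrp i).trans (hp₁ i))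
  rcases eq_or_ne (∑' i, ENNReal.ofReal (sh (p i))) ∞ with htop | hfin
  · exact htop ▸ le_top
  have summable_p : Summable fun i ↦ sh (p i) := by
    simpa only [ENNReal.toReal_ofReal (hshp _)] using ENNReal.summable_toReal hfin
  have hderiv := (differentiableAt_sh hpos.ne').hasDerivAt
  have summable_r : Summable fun i ↦ sh (r i) :=
    summable_comp_of_concaveOn_of_le concaveOn_sh hr hp hrp hmax hderiv hq.summable hshr summable_p
  have sum_le : sh q + ∑' i, sh (r i) ≤ ∑' i, sh (p i) := by
    simpa [hr₀] using concaveOn_add_tsum_le_of_hasSum_sub concaveOn_sh hr hp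
      (by simpa [hr₀] using hq₀) hrp hmax hderiv hq summable_r summable_p
  rw [← ENNReal.ofReal_tsum_of_nonneg hshr summable_r,
    ← ENNReal.ofReal_tsum_of_nonneg hshp summable_p,
    ← ENNReal.ofReal_add (sh_nonneg hq₀ hq₁) (tsum_nonneg hshr)]
  exact ENNReal.ofReal_le_ofReal sum_le

lemma ofReal_sh_add_tsum_le (hr : ∀ i, 0 ≤ r i) (hrp : ∀ i, r i ≤ p i)
    (hmax : ∀ i, p i ≤ p i₀) (hr₀ : r i₀ = 0)
    (hq : HasSum (fun i ↦ p i - r i) q) (hq₁ : q ≤ 1) :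
    ENNReal.ofReal (sh q) + ∑' i, ENNReal.ofReal (sh (r i))
      ≤ ∑' i, ENNReal.ofReal (sh (p i)) := by
  rcases ((hr i₀).trans (hrp i₀)).eq_or_lt with hzero | hpos
  · -- `sh` has no derivative at `0`, but here all masses vanish.
    have p_eq_zero (i) : p i = 0 := le_antisymm (hzero ▸ hmax i) ((hr i).trans (hrp i))
    have r_eq_zero (i) : r i = 0 := le_antisymm (p_eq_zero i ▸ hrp i) (hr i)
    have q_eq_zero : q = 0 := hq.unique (by simpa only [p_eq_zero, r_eq_zero, sub_zero]
      using hasSum_zero)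
    simp [p_eq_zero, r_eq_zero, q_eq_zero]
  · exact ofReal_sh_add_tsum_le_of_pos hr hrp hmax hpos hr₀ hq hq₁

end Shannon

section Measure

variable {X ι : Type*} [MeasurableSpace X] [Countable ι] {μ : Measure X} {P : ι → Set X} {Q : Set X}

lemma measure_eq_tsum_inter_of_measure_sdiff_iUnion_eq_zero (hPm : ∀ i, MeasurableSet (P i))
    (hPd : Pairwise (Function.onFun Disjoint P)) (hQm : MeasurableSet Q)
    (hQP : μ (Q \ ⋃ i, P i) = 0) :
    μ Q = ∑' i, μ (P i ∩ Q) :=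
  calc μ Q = μ (Q ∩ ⋃ i, P i) := (measure_inter_conull' hQP).symm
    _ = μ (⋃ i, P i ∩ Q) := by rw [Set.inter_comm, Set.iUnion_inter]
    _ = ∑' i, μ (P i ∩ Q) := measure_iUnion
      (fun _ _ hij ↦ (hPd hij).mono Set.inter_subset_left Set.inter_subset_left)
      fun i ↦ (hPm i).inter hQm

lemma hasSum_measureReal_sub_measureReal_sdiff (hPm : ∀ i, MeasurableSet (P i))
    (hPd : Pairwise (Function.onFun Disjoint P)) (hPfin : ∀ i, μ (P i) ≠ ∞)
    (hQm : MeasurableSet Q) (hQfin : μ Q ≠ ∞) (hQP : μ (Q \ ⋃ i, P i) = 0) :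
    HasSum (fun i ↦ μ.real (P i) - μ.real (P i \ Q)) (μ.real Q) := by
  have hQsum := measure_eq_tsum_inter_of_measure_sdiff_iUnion_eq_zero hPm hPd hQm hQP
  have sub_eq (i) : μ.real (P i) - μ.real (P i \ Q) = μ.real (P i ∩ Q) :=
    sub_eq_of_eq_add (measureReal_inter_add_sdiff hQm (hPfin i)).symm
  have inter_fin (i) : μ (P i ∩ Q) ≠ ∞ := measure_ne_top_of_subset Set.inter_subset_left (hPfin i)
  rw [funext sub_eq, measureReal_def, hQsum, ENNReal.tsum_toReal_eq inter_fin]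
  exact ENNReal.hasSum_toReal (hQsum ▸ hQfin)

theorem stmt_1_general (hPm : ∀ i, MeasurableSet (P i))
    (hPd : Pairwise (Function.onFun Disjoint P)) (i₀ : ι) (hmax : ∀ i, μ (P i) ≤ μ (P i₀))
    (hQm : MeasurableSet Q) (hQ₁ : μ Q ≤ 1) (hQP : μ (Q \ ⋃ i, P i) = 0) (hsub : P i₀ ⊆ Q) :
    ENNReal.ofReal (sh (μ.real Q)) + ∑' i, ENNReal.ofReal (sh (μ.real (P i \ Q)))
      ≤ ∑' i, ENNReal.ofReal (sh (μ.real (P i))) := by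
  have hQfin : μ Q ≠ ∞ := ne_top_of_le_ne_top ENNReal.one_ne_top hQ₁
  have hPfin (i) : μ (P i) ≠ ∞ :=
    ne_top_of_le_ne_top hQfin ((hmax i).trans (measure_mono hsub))
  exact ofReal_sh_add_tsum_le (fun _ ↦ measureReal_nonneg)
    (fun i ↦ measureReal_mono Set.sdiff_subset (hPfin i))
    (fun i ↦ ENNReal.toReal_mono (hPfin i₀) (hmax i))
    (by rw [Set.sdiff_eq_empty.2 hsub, measureReal_empty])
    (hasSum_measureReal_sub_measureReal_sdiff hPm hPd hPfin hQm hQfin hQP)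
    (ENNReal.toReal_mono ENNReal.one_ne_top hQ₁)

end Measure

lemma partEntropy_eq_zero_add {X : Type*} [MeasurableSpace X] (μ : Measure X) (A : ℕ → Set X) :
    partEntropy μ A = ENNReal.ofReal (sh (μ.real (A 0))) + partEntropy μ fun i ↦ A (i + 1) :=
  tsum_eq_zero_add' ENNReal.summable

/-- Lemma II.1: if `P i₀` has maximal measure among the elements of the `𝒬`-acceptable
partition `P`, and `Q ∈ 𝒬` contains `P i₀`, then
`h(μ; {Q} ∪ P_{X∖Q}) ≤ h(μ; P)`. -/
theorem stmt_1 {X : Type*} [MeasurableSpace X] (μ : Measure X) (hμ : μ Set.univ ≤ 1)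
    (𝒬 : Set (Set X)) (h𝒬 : IsErrorControl 𝒬)
    (P : ℕ → Set X) (hP : IsPartition μ P) (hPQ : Acceptable 𝒬 P)
    (i₀ : ℕ) (hmax : ∀ i, μ (P i) ≤ μ (P i₀))
    (Q : Set X) (hQ : Q ∈ 𝒬) (hsub : P i₀ ⊆ Q) :
    partEntropy μ (fun i => match i with
      | 0 => Q
      | (j+1) => P j \ Q) ≤ partEntropy μ P := by
  rw [partEntropy_eq_zero_add]
  exact stmt_1_general hP.1 hP.2.1 i₀ hmax (h𝒬.1 Q hQ) ((measure_mono (Set.subset_univ Q)).trans hμ)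
    (measure_mono_null (Set.sdiff_subset_sdiff_left (Set.subset_univ Q)) hP.2.2) hsub
end

section
/- Let (X, Σ, μ) be a subprobability space and let P be a partition of X. Let (R_i)_{i∈ℕ} be a sequence of pairwise disjoint measurable subsets of X such that for every i ∈ ℕ and every P ∈ P, μ(R_i) ≥ μ(P ∩ X_i), where X_0 = X and X_i = X ∖ (R_0 ∪ … ∪ R_{i−1}) for i ≥ 1. Then μ(X ∖ ⋃_{i∈ℕ} R_i) = 0; in particular, the family {R_i : i ∈ ℕ} is a partition of X. -/
open MeasureTheory ENNReal Filter

/-! The disjoint sets `R i` share a finite total measure, so `μ (R i) → 0`. The part of `P j`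
missed by every `R i` is still uncovered at each stage `i`, so its measure is at most `μ (R i)`,
hence zero. These countably many null parts exhaust the uncovered set up to a null set. -/

section

variable {X ι : Type*} [MeasurableSpace X] {μ : Measure X}

theorem tendsto_measure_cofinite_zero_of_pairwise_aedisjoint [IsFiniteMeasure μ] {R : ι → Set X}
    (hmeas : ∀ i, NullMeasurableSet (R i) μ) (hdisj : Pairwise (Function.onFun (AEDisjoint μ) R)) :
    Tendsto (fun i => μ (R i)) cofinite (nhds 0) := by
  have hsum : ∑' i, μ (R i) ≤ μ Set.univ :=
    (tsum_meas_le_meas_iUnion_of_disjoint₀ μ hmeas hdisj).trans (measure_mono (Set.subset_univ _))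
  exact ENNReal.tendsto_cofinite_zero_of_tsum_ne_top (hsum.trans_lt (measure_lt_top μ _)).ne

theorem measure_sdiff_iUnion_eq_zero_of_tendsto_zero {R : ℕ → Set X} {s : Set X}
    (hR : Tendsto (fun i => μ (R i)) atTop (nhds 0))
    (hmaj : ∀ i, μ (s \ ⋃ l ∈ Finset.range i, R l) ≤ μ (R i)) :
    μ (s \ ⋃ i, R i) = 0 := by
  have hle (i : ℕ) : μ (s \ ⋃ l, R l) ≤ μ (R i) :=
    calc
      μ (s \ ⋃ l, R l) ≤ μ (s \ ⋃ l ∈ Finset.range i, R l) :=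
        measure_mono (Set.sdiff_subset_sdiff_right (Set.iUnion₂_subset_iUnion _ R))
      _ ≤ μ (R i) := hmaj i
  exact le_zero_iff.mp (ge_of_tendsto' hR hle)

theorem measure_eq_zero_of_forall_inter_eq_zero [Countable ι] {P : ι → Set X} {s : Set X}
    (hcover : μ (s \ ⋃ j, P j) = 0) (hinter : ∀ j, μ (P j ∩ s) = 0) : μ s = 0 := by
  rw [← Set.sdiff_union_inter s (⋃ j, P j), Set.inter_comm s, Set.iUnion_inter]
  exact measure_union_null hcover (measure_iUnion_null hinter)

theorem stmt_2_general [IsFiniteMeasure μ] [Countable ι] {P : ι → Set X} {R : ℕ → Set X}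
    (hP : μ (Set.univ \ ⋃ j, P j) = 0) (hRmeas : ∀ i, NullMeasurableSet (R i) μ)
    (hRdisj : Pairwise (Function.onFun (AEDisjoint μ) R))
    (hmaj : ∀ i j, μ (P j ∩ (Set.univ \ ⋃ l ∈ Finset.range i, R l)) ≤ μ (R i)) :
    μ (Set.univ \ ⋃ i, R i) = 0 := by
  simp only [← Set.inter_sdiff_assoc, Set.inter_univ] at hmaj
  have hR : Tendsto (fun i => μ (R i)) atTop (nhds 0) :=
    Nat.cofinite_eq_atTop ▸ tendsto_measure_cofinite_zero_of_pairwise_aedisjoint hRmeas hRdisj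
  have hpiece (j : ι) : μ (P j ∩ (Set.univ \ ⋃ i, R i)) = 0 := by
    rw [← Set.inter_sdiff_assoc, Set.inter_univ]
    exact measure_sdiff_iUnion_eq_zero_of_tendsto_zero hR (hmaj · j)
  have hcover : μ ((Set.univ \ ⋃ i, R i) \ ⋃ j, P j) = 0 :=
    measure_mono_null (Set.sdiff_subset_sdiff_left (Set.subset_univ _)) hP
  exact measure_eq_zero_of_forall_inter_eq_zero hcover hpiece

end

/-- Theorem II.1 (abstract form): if `R` is a sequence of pairwise disjoint measurable
sets such that at every stage `i`, `μ(R i)` dominates `μ(P ∩ X_i)` for every element `P`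
of the partition `P`, where `X_i = X ∖ (R_0 ∪ … ∪ R_{i-1})`, then `R` covers `X` up to a
null set; in particular `R` is a partition of `X`. -/
theorem stmt_2 {X : Type*} [MeasurableSpace X] (μ : Measure X) (hμ : μ Set.univ ≤ 1)
    (P : ℕ → Set X) (hP : IsPartition μ P)
    (R : ℕ → Set X) (hRmeas : ∀ i, MeasurableSet (R i))
    (hRdisj : Pairwise (Function.onFun Disjoint R))
    (hmaj : ∀ i j,
      μ (P j ∩ (Set.univ \ ⋃ l ∈ Finset.range i, R l)) ≤ μ (R i)) :
    μ (Set.univ \ ⋃ i, R i) = 0 ∧ IsPartition μ R := by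
  have : IsFiniteMeasure μ := ⟨hμ.trans_lt one_lt_top⟩
  have hnull := stmt_2_general hP.2.2 (fun i => (hRmeas i).nullMeasurableSet)
    (fun _ _ hij => (hRdisj hij).aedisjoint) hmaj
  exact ⟨hnull, hRmeas, hRdisj, hnull⟩
end

section
/- Let (X, Σ, μ) be a subprobability space and let Q be an error-control family on X. Then H(μ; Q) = inf{ h(μ; P) ∈ [0, ∞] : P is a partition of X, P ≺ Q, and every element of P belongs to the sigma algebra generated by Q }. -/
open MeasureTheory ENNReal Filter

/-!
Given an acceptable partition `P` with `P i ⊆ Q i ∈ 𝒬`, send each point to the first `Q i`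
containing it, in order of decreasing `μ (P i)`. The resulting cells `R i` lie in the σ-algebra
generated by `𝒬`, and a point of `R i ∩ P j` witnesses `μ (P j) ≤ μ (P i)`: mass only moves towards
heavier indices. Hence the cross entropy `∑ μ (R i) log (1 / μ (P i))` is at most the
entropy of `P`, while by Gibbs' inequality it is at least the entropy of `R`.
-/

section Surprisal

/-- The surprisal (information content) `log (1 / p)` of an event of measure `p`, in nats, truncated
at `0` when `1 < p`. The value `surprisal 0 = ∞` makes it antitone on all of `ℝ≥0∞`. -/
noncomputable def surprisal (p : ℝ≥0∞) : ℝ≥0∞ :=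
  (log p⁻¹).toENNReal

theorem surprisal_antitone : Antitone surprisal := fun _ _ hpq =>
  EReal.toENNReal_le_toENNReal (log_monotone (ENNReal.inv_le_inv.mpr hpq))

@[simp]
theorem surprisal_zero : surprisal 0 = ∞ := by
  simp [surprisal]

theorem surprisal_ofReal {x : ℝ} (hx : 0 < x) :
    surprisal (ENNReal.ofReal x) = ENNReal.ofReal (-Real.log x) := by
  rw [surprisal, ← ENNReal.ofReal_inv_of_pos hx, log_ofReal_of_pos (inv_pos.mpr hx),
    EReal.real_coe_toENNReal, Real.log_inv]

theorem eq_zero_or_top_or_exists_pos_ofReal (p : ℝ≥0∞) :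
    p = 0 ∨ p = ∞ ∨ ∃ x : ℝ, 0 < x ∧ p = ENNReal.ofReal x :=
  p.trichotomy.imp_right <| Or.imp_right fun hp =>
    ⟨p.toReal, hp, (ofReal_toReal (toReal_pos_iff.mp hp).2.ne).symm⟩

theorem ofReal_sh_toReal (p : ℝ≥0∞) :
    ENNReal.ofReal (sh p.toReal) = p * surprisal p / ENNReal.ofReal (Real.log 2) := by
  rcases eq_zero_or_top_or_exists_pos_ofReal p with rfl | rfl | ⟨x, hx, rfl⟩
  · simp [sh]
  · simp [sh, surprisal]
  · rw [toReal_ofReal hx.le, surprisal_ofReal hx, ← ofReal_mul hx.le,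
      ← ofReal_div_of_pos (Real.log_pos one_lt_two)]
    simp only [sh, Real.logb, neg_mul, mul_neg, neg_div, mul_div_assoc]

theorem mul_neg_log_add_le {r p : ℝ} (hr : 0 < r) (hp : 0 < p) :
    r * -Real.log r + r ≤ r * -Real.log p + p := by
  have log_ratio_le : Real.log p - Real.log r ≤ p / r - 1 := by
    rw [← Real.log_div hp.ne' hr.ne']
    exact Real.log_le_sub_one_of_pos (div_pos hp hr)
  have := mul_le_mul_of_nonneg_left log_ratio_le hr.le
  rw [mul_sub, mul_sub, mul_div_cancel₀ p hr.ne'] at this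
  linarith

theorem mul_surprisal_self_add_le {r : ℝ≥0∞} (hr : r ≤ 1) (p : ℝ≥0∞) :
    r * surprisal r + r ≤ r * surprisal p + p := by
  rcases eq_zero_or_top_or_exists_pos_ofReal r with rfl | rfl | ⟨x, hx, rfl⟩
  · simp
  · simp at hr
  rcases eq_zero_or_top_or_exists_pos_ofReal p with rfl | rfl | ⟨y, hy, rfl⟩
  · simp [hx]
  · simp
  have neg_log_nonneg : 0 ≤ -Real.log x :=
    neg_nonneg.mpr (Real.log_nonpos hx.le (ofReal_le_one.mp hr))
  rw [surprisal_ofReal hx, surprisal_ofReal hy, ← ofReal_mul hx.le, ← ofReal_mul hx.le,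
    ← ofReal_add (mul_nonneg hx.le neg_log_nonneg) hx.le]
  exact (ofReal_le_ofReal (mul_neg_log_add_le hx hy)).trans ofReal_add_le

theorem tsum_mul_surprisal_self_le {ι : Type*} {r p : ι → ℝ≥0∞} (hr : ∀ i, r i ≤ 1)
    (hpr : ∑' i, p i ≤ ∑' i, r i) (hfin : ∑' i, r i ≠ ∞) :
    ∑' i, r i * surprisal (r i) ≤ ∑' i, r i * surprisal (p i) := by
  refine (ENNReal.add_le_add_iff_right hfin).mp ?_
  calc ∑' i, r i * surprisal (r i) + ∑' i, r i
      = ∑' i, (r i * surprisal (r i) + r i) := ENNReal.tsum_add.symm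
    _ ≤ ∑' i, (r i * surprisal (p i) + p i) :=
        ENNReal.tsum_le_tsum fun i => mul_surprisal_self_add_le (hr i) (p i)
    _ = ∑' i, r i * surprisal (p i) + ∑' i, p i := ENNReal.tsum_add
    _ ≤ ∑' i, r i * surprisal (p i) + ∑' i, r i := by gcongr

end Surprisal

section Partition

variable {X : Type*} [MeasurableSpace X] {μ : Measure X} {P R : ℕ → Set X}

theorem IsPartition.tsum_measure_inter (hP : IsPartition μ P) (A : Set X) :
    ∑' i, μ (A ∩ P i) = μ A := by
  obtain ⟨hP_meas, hP_disj, hP_null⟩ := hP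
  calc ∑' i, μ (A ∩ P i) = ∑' i, μ.restrict A (P i) := by
        simp only [Measure.restrict_apply (hP_meas _), Set.inter_comm]
    _ = μ.restrict A (⋃ i, P i) := (measure_iUnion hP_disj hP_meas).symm
    _ = μ (A ∩ ⋃ i, P i) := by
        rw [Measure.restrict_apply (.iUnion hP_meas), Set.inter_comm]
    _ = μ A := measure_inter_conull (by rwa [Set.compl_eq_univ_sdiff])

theorem IsPartition.tsum_measure (hP : IsPartition μ P) : ∑' i, μ (P i) = μ Set.univ := by
  simpa only [Set.univ_inter] using hP.tsum_measure_inter Set.univ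

theorem IsPartition.tsum_measure_mul_le (hR : IsPartition μ R) (hP : IsPartition μ P)
    {c d : ℕ → ℝ≥0∞} (hcd : ∀ i j, (R i ∩ P j).Nonempty → c i ≤ d j) :
    ∑' i, μ (R i) * c i ≤ ∑' j, μ (P j) * d j := by
  calc ∑' i, μ (R i) * c i = ∑' i, ∑' j, μ (R i ∩ P j) * c i := by
        simp only [ENNReal.tsum_mul_right, hP.tsum_measure_inter]
    _ ≤ ∑' i, ∑' j, μ (R i ∩ P j) * d j := by
        refine ENNReal.tsum_le_tsum fun i => ENNReal.tsum_le_tsum fun j => ?_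
        rcases (R i ∩ P j).eq_empty_or_nonempty with h_empty | h_nonempty
        · simp [h_empty]
        · gcongr
          exact hcd i j h_nonempty
    _ = ∑' j, ∑' i, μ (R i ∩ P j) * d j := ENNReal.tsum_comm
    _ = ∑' j, μ (P j) * d j := by
        simp only [ENNReal.tsum_mul_right, Set.inter_comm (R _), hR.tsum_measure_inter]

theorem partEntropy_eq_tsum_mul_surprisal :
    partEntropy μ P =
      (∑' i, μ (P i) * surprisal (μ (P i))) / ENNReal.ofReal (Real.log 2) := by
  simp only [partEntropy, ofReal_sh_toReal, div_eq_mul_inv, ENNReal.tsum_mul_right]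

theorem IsPartition.partEntropy_le_of_measure_le [IsFiniteMeasure μ] (hR : IsPartition μ R)
    (hP : IsPartition μ P) (hR_one : ∀ i, μ (R i) ≤ 1)
    (hRP : ∀ i j, (R i ∩ P j).Nonempty → μ (P j) ≤ μ (P i)) :
    partEntropy μ R ≤ partEntropy μ P := by
  rw [partEntropy_eq_tsum_mul_surprisal, partEntropy_eq_tsum_mul_surprisal]
  gcongr ?_ / _
  calc ∑' i, μ (R i) * surprisal (μ (R i)) ≤ ∑' i, μ (R i) * surprisal (μ (P i)) :=
        tsum_mul_surprisal_self_le hR_one (hP.tsum_measure.trans hR.tsum_measure.symm).le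
          (hR.tsum_measure ▸ measure_ne_top μ _)
    _ ≤ ∑' j, μ (P j) * surprisal (μ (P j)) :=
        hR.tsum_measure_mul_le hP fun i j h => surprisal_antitone (hRP i j h)

end Partition

section DisjointedBy

variable {ι X : Type*} {r : ι → ι → Prop}

/-- The family `Q` made disjoint along the relation `r`: the points of `Q i` lying in no `Q j` with
`r j i`. Unlike `disjointed`, it makes sense along well-orders of any order type. -/
def disjointedBy (r : ι → ι → Prop) (Q : ι → Set X) (i : ι) : Set X :=
  Q i \ ⋃ (j) (_ : r j i), Q j

theorem mem_disjointedBy {Q : ι → Set X} {i : ι} {x : X} :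
    x ∈ disjointedBy r Q i ↔ x ∈ Q i ∧ ∀ j, r j i → x ∉ Q j := by
  simp only [disjointedBy, Set.mem_sdiff, Set.mem_iUnion, not_exists]

theorem disjointedBy_subset (r : ι → ι → Prop) (Q : ι → Set X) (i : ι) :
    disjointedBy r Q i ⊆ Q i :=
  Set.sdiff_subset

theorem pairwise_disjoint_disjointedBy [Std.Trichotomous r] (Q : ι → Set X) :
    Pairwise (Function.onFun Disjoint (disjointedBy r Q)) := by
  intro i j hij
  refine Set.disjoint_left.mpr fun x hxi hxj => hij ?_
  rw [mem_disjointedBy] at hxi hxj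
  exact Std.Trichotomous.trichotomous (r := r) i j
    (fun h => hxj.2 i h hxi.1) fun h => hxi.2 j h hxj.1

theorem iUnion_disjointedBy [IsWellFounded ι r] (Q : ι → Set X) :
    ⋃ i, disjointedBy r Q i = ⋃ i, Q i := by
  refine (Set.iUnion_mono (disjointedBy_subset r Q)).antisymm fun x hx => ?_
  obtain ⟨i, hxi, hi_min⟩ :=
    (IsWellFounded.wf (r := r)).has_min {i | x ∈ Q i} (Set.mem_iUnion.mp hx)
  exact Set.mem_iUnion.mpr ⟨i, mem_disjointedBy.mpr ⟨hxi, fun j hji hxj => hi_min j hxj hji⟩⟩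

theorem measurableSet_disjointedBy [Countable ι] {_ : MeasurableSpace X} {Q : ι → Set X}
    (hQ : ∀ i, MeasurableSet (Q i)) (i : ι) : MeasurableSet (disjointedBy r Q i) :=
  (hQ i).diff (.iUnion fun j => .iUnion fun _ => hQ j)

end DisjointedBy

section HeavierFirst

variable {ι : Type*} [LinearOrder ι]

/-- The order on indices that puts larger weights first and breaks ties by the index. It has to be
kept apart from the order of `ℕ`: with infinitely many positive weights, the indices of weight `0`
come after all of them. -/
def HeavierFirst {α : Type*} [LT α] (w : ι → α) : ι → ι → Prop :=
  Function.onFun (Prod.Lex (· > ·) (· < ·)) fun i => (w i, i)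

theorem le_of_not_heavierFirst {α : Type*} [LinearOrder α] {w : ι → α} {i j : ι}
    (h : ¬ HeavierFirst w j i) : w j ≤ w i :=
  not_lt.mp fun hlt => h (.left _ _ hlt)

theorem wellFounded_gt_onFun_of_tsum_ne_top {κ : Type*} {w : κ → ℝ≥0∞} (hw : ∑' i, w i ≠ ∞) :
    WellFounded (Function.onFun (· > ·) w) := by
  refine WellFounded.wellFounded_iff_has_min.mpr fun s hs => ?_
  suffices ∃ m ∈ s, ∀ i ∈ s, w i ≤ w m by simpa only [Function.onFun, gt_iff_lt, not_lt] using this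
  by_cases h_pos : ∃ k ∈ s, w k ≠ 0
  · obtain ⟨k, hks, hk⟩ := h_pos
    have h_fin : {i | w k ≤ w i}.Finite := ENNReal.finite_const_le_of_tsum_ne_top hw hk
    obtain ⟨m, ⟨hkm, hms⟩, hm_max⟩ :=
      Set.exists_max_image _ w (h_fin.inter_of_left s) ⟨k, le_refl (w k), hks⟩
    refine ⟨m, hms, fun i his => ?_⟩
    exact (le_total (w k) (w i)).elim (fun hki => hm_max i ⟨hki, his⟩) fun hik => hik.trans hkm
  · push Not at h_pos
    obtain ⟨m, hms⟩ := hs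
    exact ⟨m, hms, fun i his => by simp [h_pos i his]⟩

theorem isWellOrder_heavierFirst [WellFoundedLT ι] {w : ι → ℝ≥0∞} (hw : ∑' i, w i ≠ ∞) :
    IsWellOrder ι (HeavierFirst w) where
  wf := (wellFounded_gt_onFun_of_tsum_ne_top hw).prod_lex_of_wellFoundedOn_fiber
    fun _ => wellFounded_lt.wellFoundedOn
  toTrichotomous :=
    Function.Injective.trichotomous_onFun (Prod.Lex (· > ·) (· < ·))
      (f := fun i => (w i, i)) fun _ _ h => congrArg Prod.snd h

end HeavierFirst

theorem exists_isPartition_generateFrom_partEntropy_le {X : Type*} [MeasurableSpace X]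
    {μ : Measure X} [IsFiniteMeasure μ] {𝒬 : Set (Set X)} (h𝒬 : ∀ Q ∈ 𝒬, MeasurableSet Q)
    (hμ𝒬 : ∀ Q ∈ 𝒬, μ Q ≤ 1) {P : ℕ → Set X} (hP : IsPartition μ P) (hP𝒬 : Acceptable 𝒬 P) :
    ∃ R : ℕ → Set X, IsPartition μ R ∧ Acceptable 𝒬 R ∧
      (∀ i, MeasurableSet[MeasurableSpace.generateFrom 𝒬] (R i)) ∧
      partEntropy μ R ≤ partEntropy μ P := by
  choose Q hQ𝒬 hPQ using hP𝒬
  let w : ℕ → ℝ≥0∞ := fun i => μ (P i)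
  let r : ℕ → ℕ → Prop := HeavierFirst w
  let R : ℕ → Set X := disjointedBy r Q
  have : IsWellOrder ℕ r :=
    isWellOrder_heavierFirst (hP.tsum_measure ▸ measure_ne_top μ _)
  have hRQ : ∀ i, R i ⊆ Q i := disjointedBy_subset r Q
  have hR_gen : ∀ i, MeasurableSet[MeasurableSpace.generateFrom 𝒬] (R i) :=
    measurableSet_disjointedBy fun i => MeasurableSpace.measurableSet_generateFrom (hQ𝒬 i)
  have hPR : ⋃ i, P i ⊆ ⋃ i, R i := (Set.iUnion_mono hPQ).trans_eq (iUnion_disjointedBy Q).symm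
  have hR : IsPartition μ R :=
    ⟨fun i => MeasurableSpace.generateFrom_le h𝒬 _ (hR_gen i), pairwise_disjoint_disjointedBy Q,
      measure_mono_null (Set.sdiff_subset_sdiff_right hPR) hP.2.2⟩
  have hRP : ∀ i j, (R i ∩ P j).Nonempty → μ (P j) ≤ μ (P i) := fun i j ⟨x, hxR, hxP⟩ =>
    le_of_not_heavierFirst (w := w) fun hji => (mem_disjointedBy.mp hxR).2 j hji (hPQ j hxP)
  exact ⟨R, hR, fun i => ⟨Q i, hQ𝒬 i, hRQ i⟩, hR_gen,
    hR.partEntropy_le_of_measure_le hP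
      (fun i => (measure_mono (hRQ i)).trans (hμ𝒬 _ (hQ𝒬 i))) hRP⟩

-- `μ Q ≤ 1` keeps all measures in the range `[0, 1]` where `sh` is nonnegative; beyond it the
-- `ENNReal.ofReal` in `partEntropy` would truncate.
theorem stmt_4_general {X : Type*} [MeasurableSpace X] (μ : Measure X) [IsFiniteMeasure μ]
    {𝒬 : Set (Set X)} (h𝒬 : ∀ Q ∈ 𝒬, MeasurableSet Q) (hμ𝒬 : ∀ Q ∈ 𝒬, μ Q ≤ 1) :
    coverEntropy μ 𝒬 =
      ⨅ (P : ℕ → Set X) (_ : IsPartition μ P) (_ : Acceptable 𝒬 P)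
        (_ : ∀ i, MeasurableSet[MeasurableSpace.generateFrom 𝒬] (P i)),
        partEntropy μ P := by
  apply le_antisymm
  · exact iInf_mono fun P => iInf₂_mono fun _ _ => le_iInf fun _ => le_rfl
  · refine le_iInf fun P => le_iInf₂ fun hP hP𝒬 => ?_
    obtain ⟨R, hR, hR𝒬, hR_gen, hRP⟩ :=
      exists_isPartition_generateFrom_partEntropy_le h𝒬 hμ𝒬 hP hP𝒬
    exact iInf_le_of_le R (iInf₂_le_of_le hR hR𝒬 (iInf_le_of_le hR_gen hRP))

/-- Corollary III.1: `H(μ; 𝒬)` equals the infimum of entropies over `𝒬`-acceptable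
partitions all of whose elements lie in the σ-algebra generated by `𝒬`. -/
theorem stmt_4 {X : Type*} [MeasurableSpace X] (μ : Measure X) (hμ : μ Set.univ ≤ 1)
    (𝒬 : Set (Set X)) (h𝒬 : IsErrorControl 𝒬) :
    coverEntropy μ 𝒬 =
      ⨅ (P : ℕ → Set X) (_ : IsPartition μ P) (_ : Acceptable 𝒬 P)
        (_ : ∀ i, MeasurableSet[MeasurableSpace.generateFrom 𝒬] (P i)),
        partEntropy μ P := by
  have : IsFiniteMeasure μ := ⟨hμ.trans_lt one_lt_top⟩
  exact stmt_4_general μ h𝒬.1 fun Q _ => (measure_mono (Set.subset_univ Q)).trans hμ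
end

section
/- Let X = (0,1) with the Borel sigma algebra and Lebesgue measure λ, and let Q = { [a,b] : 0 < a < b < 1 } be the error-control family of all closed subintervals of (0,1). Then H(λ; Q) = 0, yet h(λ; P) > 0 for every Q-acceptable partition P of X; hence the infimum defining H(λ; Q) is not attained on any partition. -/
open MeasureTheory ENNReal Filter

/-- Lebesgue measure on the open unit interval `(0,1)`, viewed as a subtype of `ℝ`. -/
noncomputable def lam : Measure (Set.Ioo (0:ℝ) 1) :=
  MeasureTheory.volume.comap Subtype.val

/-- The error-control family of all closed subintervals `[a,b]` with `0 < a < b < 1`. -/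
def closedIntervals : Set (Set (Set.Ioo (0:ℝ) 1)) :=
  {S | ∃ a b : ℝ, 0 < a ∧ a < b ∧ b < 1 ∧
    S = (Subtype.val : Set.Ioo (0:ℝ) 1 → ℝ) ⁻¹' Set.Icc a b}

/-!
All that matters about closed subintervals of `(0,1)` is that their measures are less than `1` but
come arbitrarily close to `1`. Since `sh` vanishes at `0` and `1` and is positive in between, the
first property makes every acceptable partition have positive entropy. By the second one, choose
`A 0, A 1, …` in the family with `μ (A k)` tending to `1`, and cut out of each `A k` the union of
the previous ones. The first piece has measure near `1` and the `(k + 1)`-st has measure at most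
`1 - μ (A k)`, so by continuity of `sh` the entropy is as small as desired if `μ (A k)` is close
enough to `1` for each `k`.
-/

open scoped Topology

lemma sh_eq_negMulLog_div (x : ℝ) : sh x = Real.negMulLog x / Real.log 2 := by
  rw [sh, Real.negMulLog, Real.logb, mul_div_assoc]

lemma continuous_sh : Continuous sh := by
  simp only [funext sh_eq_negMulLog_div]
  fun_prop

lemma sh_pos {x : ℝ} (hx₀ : 0 < x) (hx₁ : x < 1) : 0 < sh x :=
  mul_pos_of_neg_of_neg (neg_neg_of_pos hx₀) (Real.logb_neg one_lt_two hx₀ hx₁)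

lemma continuousAt_ofReal_sh_toReal {a : ℝ≥0∞} (ha : a ≠ ∞) :
    ContinuousAt (fun t : ℝ≥0∞ => ENNReal.ofReal (sh t.toReal)) a :=
  (ENNReal.continuous_ofReal.comp continuous_sh).continuousAt.comp (ENNReal.continuousAt_toReal ha)

section Mass

variable {ι : Type*} {l : Filter ι} {m : ι → ℝ≥0∞} {ε : ℝ≥0∞}

lemma eventually_ofReal_sh_toReal_le_of_tendsto_one (hm : Tendsto m l (𝓝 1)) (hε : 0 < ε) :
    ∀ᶠ i in l, ENNReal.ofReal (sh (m i).toReal) ≤ ε := by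
  have hsh : Tendsto (fun i => ENNReal.ofReal (sh (m i).toReal)) l (𝓝 0) := by
    simpa [Function.comp_def, sh] using
      (continuousAt_ofReal_sh_toReal one_ne_top).tendsto.comp hm
  exact hsh.eventually_le_const hε

lemma eventually_forall_le_ofReal_sh_toReal_le (hm : Tendsto m l (𝓝 0)) (hε : 0 < ε) :
    ∀ᶠ i in l, ∀ t ≤ m i, ENNReal.ofReal (sh t.toReal) ≤ ε := by
  have hsh : Tendsto (fun t : ℝ≥0∞ => ENNReal.ofReal (sh t.toReal)) (𝓝 0) (𝓝 0) := by
    simpa [sh] using (continuousAt_ofReal_sh_toReal zero_ne_top).tendsto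
  obtain ⟨δ, hδ, hshδ⟩ :=
    ENNReal.nhds_zero_basis_Iic.eventually_iff.1 (hsh.eventually_le_const hε)
  filter_upwards [hm.eventually_le_const hδ] with i hi t ht
  exact hshδ (ht.trans hi)

end Mass

lemma disjointed_subset_compl {ι X : Type*} [Preorder ι] [LocallyFiniteOrderBot ι]
    (A : ι → Set X) {i j : ι} (hij : i < j) : disjointed A j ⊆ (A i)ᶜ := by
  rw [disjointed_eq_inter_compl]
  exact Set.inter_subset_right.trans (Set.biInter_subset_of_mem hij)

lemma acceptable_disjointed {X : Type*} {𝒬 : Set (Set X)} {A : ℕ → Set X}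
    (hA : Acceptable 𝒬 A) : Acceptable 𝒬 (disjointed A) :=
  fun k => (hA k).imp fun _ hQ => ⟨hQ.1, (disjointed_subset A k).trans hQ.2⟩

section ErrorControl

variable {X : Type*} [MeasurableSpace X] {μ : Measure X} {𝒬 : Set (Set X)}

lemma IsPartition.exists_measure_ne_zero [NeZero μ] {P : ℕ → Set X} (hP : IsPartition μ P) :
    ∃ i, μ (P i) ≠ 0 := by
  by_contra! hnull
  have hunion : μ (⋃ i, P i) = 0 := measure_iUnion_null hnull
  apply NeZero.ne μ
  rw [← Measure.measure_univ_eq_zero, ← Set.union_sdiff_cancel (Set.subset_univ (⋃ i, P i))]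
  exact measure_union_null hunion hP.2.2

theorem partEntropy_pos_of_acceptable [NeZero μ] (hlt : ∀ Q ∈ 𝒬, μ Q < 1) {P : ℕ → Set X}
    (hP : IsPartition μ P) (hacc : Acceptable 𝒬 P) : 0 < partEntropy μ P := by
  obtain ⟨i, hi⟩ := hP.exists_measure_ne_zero
  obtain ⟨Q, hQ, hPQ⟩ := hacc i
  have hi_lt : μ (P i) < 1 := (measure_mono hPQ).trans_lt (hlt Q hQ)
  have hsh : 0 < sh (μ (P i)).toReal :=
    sh_pos (ENNReal.toReal_pos hi hi_lt.ne_top) (ENNReal.toReal_lt_of_lt_ofReal (by simpa))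
  exact (ENNReal.ofReal_pos.2 hsh).trans_le (ENNReal.le_tsum i)

lemma coverEntropy_le_partEntropy {P : ℕ → Set X} (hP : IsPartition μ P)
    (hacc : Acceptable 𝒬 P) : coverEntropy μ 𝒬 ≤ partEntropy μ P :=
  iInf_le_of_le P (iInf₂_le hP hacc)

lemma isPartition_disjointed {A : ℕ → Set X} (hmeas : ∀ k, MeasurableSet (A k))
    (hcover : μ (⋃ k, A k)ᶜ = 0) : IsPartition μ (disjointed A) := by
  refine ⟨MeasurableSet.disjointed hmeas, disjoint_disjointed A, ?_⟩
  rwa [iUnion_disjointed, ← Set.compl_eq_univ_sdiff]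

variable [IsProbabilityMeasure μ]

lemma measure_compl_iUnion_eq_zero_of_tendsto {ι : Type*} [Countable ι] {l : Filter ι} [l.NeBot]
    {A : ι → Set X} (hmeas : ∀ i, MeasurableSet (A i))
    (hA : Tendsto (fun i => μ (A i)) l (𝓝 1)) : μ (⋃ i, A i)ᶜ = 0 := by
  rw [prob_compl_eq_zero_iff (MeasurableSet.iUnion hmeas)]
  exact prob_le_one.antisymm (le_of_tendsto' hA fun i => measure_mono (Set.subset_iUnion A i))

lemma tendsto_measure_compl_zero {ι : Type*} {l : Filter ι} {A : ι → Set X}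
    (hmeas : ∀ i, MeasurableSet (A i)) (hA : Tendsto (fun i => μ (A i)) l (𝓝 1)) :
    Tendsto (fun i => μ (A i)ᶜ) l (𝓝 0) := by
  simp only [prob_compl_eq_one_sub (hmeas _)]
  simpa using ENNReal.Tendsto.sub tendsto_const_nhds hA (Or.inl one_ne_top)

lemma exists_strictMono_partEntropy_disjointed_le {A : ℕ → Set X}
    (hmeas : ∀ k, MeasurableSet (A k)) (hA : Tendsto (fun k => μ (A k)) atTop (𝓝 1))
    {ε : ℝ≥0∞} (hε : 0 < ε) :
    ∃ φ : ℕ → ℕ, StrictMono φ ∧ partEntropy μ (disjointed (A ∘ φ)) ≤ ε := by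
  obtain ⟨δ, hδ, hδε⟩ := ENNReal.exists_pos_sum_of_countable' hε.ne' ℕ
  obtain ⟨φ, hφ, hsmall⟩ := extraction_forall_of_eventually fun k =>
    (eventually_ofReal_sh_toReal_le_of_tendsto_one hA (hδ k)).and
      (eventually_forall_le_ofReal_sh_toReal_le (tendsto_measure_compl_zero hmeas hA) (hδ (k + 1)))
  refine ⟨φ, hφ, (ENNReal.tsum_le_tsum fun k => ?_).trans hδε.le⟩
  cases k with
  | zero => simpa only [disjointed_zero, Function.comp_apply] using (hsmall 0).1
  | succ k =>
    have hsub : disjointed (A ∘ φ) (k + 1) ⊆ (A (φ k))ᶜ :=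
      disjointed_subset_compl (A ∘ φ) k.lt_succ_self
    exact (hsmall k).2 _ (measure_mono hsub)

theorem coverEntropy_eq_zero_of_one_mem_closure (hmeas : ∀ Q ∈ 𝒬, MeasurableSet Q)
    (hone : 1 ∈ closure (μ '' 𝒬)) : coverEntropy μ 𝒬 = 0 := by
  obtain ⟨m, hm, hm_one⟩ := mem_closure_iff_seq_limit.1 hone
  choose A hA𝒬 hAm using hm
  have hA : Tendsto (fun k => μ (A k)) atTop (𝓝 1) := by simpa only [hAm] using hm_one
  have hAmeas k : MeasurableSet (A k) := hmeas _ (hA𝒬 k)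
  refine nonpos_iff_eq_zero.1 (le_of_forall_gt_imp_ge_of_dense fun ε hε => ?_)
  obtain ⟨φ, hφ, hentropy⟩ := exists_strictMono_partEntropy_disjointed_le hAmeas hA hε
  have hcover : μ (⋃ k, (A ∘ φ) k)ᶜ = 0 :=
    measure_compl_iUnion_eq_zero_of_tendsto (fun k => hAmeas (φ k)) (hA.comp hφ.tendsto_atTop)
  have hpart : IsPartition μ (disjointed (A ∘ φ)) :=
    isPartition_disjointed (fun k => hAmeas (φ k)) hcover
  have hacc : Acceptable 𝒬 (disjointed (A ∘ φ)) :=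
    acceptable_disjointed fun k => ⟨A (φ k), hA𝒬 (φ k), subset_rfl⟩
  exact (coverEntropy_le_partEntropy hpart hacc).trans hentropy

theorem stmt_7_general (hmeas : ∀ Q ∈ 𝒬, MeasurableSet Q) (hlt : ∀ Q ∈ 𝒬, μ Q < 1)
    (hone : 1 ∈ closure (μ '' 𝒬)) :
    coverEntropy μ 𝒬 = 0 ∧
      ∀ P : ℕ → Set X, IsPartition μ P → Acceptable 𝒬 P → 0 < partEntropy μ P :=
  ⟨coverEntropy_eq_zero_of_one_mem_closure hmeas hone, fun _ => partEntropy_pos_of_acceptable hlt⟩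

end ErrorControl

section ClosedIntervals

lemma lam_preimage_val (s : Set ℝ) :
    lam (Subtype.val ⁻¹' s) = volume (Set.Ioo (0 : ℝ) 1 ∩ s) := by
  rw [lam, comap_subtype_coe_apply measurableSet_Ioo, Subtype.image_preimage_coe]

instance isProbabilityMeasure_lam : IsProbabilityMeasure lam where
  measure_univ := by
    rw [← Set.preimage_univ, lam_preimage_val]
    simp

lemma lam_preimage_Icc {a b : ℝ} (ha : 0 < a) (hb : b < 1) :
    lam (Subtype.val ⁻¹' Set.Icc a b) = ENNReal.ofReal (b - a) := by
  rw [lam_preimage_val, Set.inter_eq_right.2 (Set.Icc_subset_Ioo ha hb), Real.volume_Icc]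

lemma measurableSet_of_mem_closedIntervals {Q : Set (Set.Ioo (0 : ℝ) 1)}
    (hQ : Q ∈ closedIntervals) : MeasurableSet Q := by
  obtain ⟨a, b, -, -, -, rfl⟩ := hQ
  exact measurable_subtype_coe measurableSet_Icc

lemma lam_lt_one_of_mem_closedIntervals {Q : Set (Set.Ioo (0 : ℝ) 1)}
    (hQ : Q ∈ closedIntervals) : lam Q < 1 := by
  obtain ⟨a, b, ha, -, hb, rfl⟩ := hQ
  rw [lam_preimage_Icc ha hb, ENNReal.ofReal_lt_one]
  linarith

lemma one_mem_closure_lam_image_closedIntervals : 1 ∈ closure (lam '' closedIntervals) := by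
  have hlim : Tendsto (fun r : ℝ => ENNReal.ofReal (1 - r - r)) (𝓝[>] 0) (𝓝 1) := by
    have hcont : Continuous fun r : ℝ => ENNReal.ofReal (1 - r - r) :=
      ENNReal.continuous_ofReal.comp (by fun_prop)
    simpa using (hcont.tendsto 0).mono_left nhdsWithin_le_nhds
  refine mem_closure_of_tendsto hlim ?_
  filter_upwards [Ioo_mem_nhdsGT (show (0 : ℝ) < 1 / 2 by norm_num)] with r ⟨hr₀, hr⟩
  exact ⟨_, ⟨r, 1 - r, hr₀, by linarith, by linarith, rfl⟩, lam_preimage_Icc hr₀ (by linarith)⟩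

end ClosedIntervals

/-- Example III.1: on `X = (0,1)` with Lebesgue measure `λ` and the error-control family
`𝒬` of all closed subintervals, `H(λ; 𝒬) = 0`, yet every `𝒬`-acceptable partition has
strictly positive entropy; hence the infimum defining `H(λ; 𝒬)` is not attained. -/
theorem stmt_7 :
    coverEntropy lam closedIntervals = 0 ∧
      ∀ P : ℕ → Set (Set.Ioo (0:ℝ) 1),
        IsPartition lam P → Acceptable closedIntervals P →
          0 < partEntropy lam P :=
  stmt_7_general (fun _ => measurableSet_of_mem_closedIntervals)
    (fun _ => lam_lt_one_of_mem_closedIntervals) one_mem_closure_lam_image_closedIntervals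
end
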